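/- arXiv:1506.00456 — 2 statements merged into one kernel-verified Lean document; each statement's English description precedes it below -/
import Mathlib

section
/- Let ε > 0 and Re > 0 be real, k_x, k_y ≥ 0 real, ω ∈ ℂ, and set k² := k_x² + ε k_y² and μ² := ε k² − i ω Re √ε. Let 𝒜 : ℝ → ℂ be four times continuously differentiable, and define w(x,y,z,t) := 𝒜(z) · exp(i(k_x x + k_y y − ω t)). Then w satisfies (∂_z² + ε ∂_x² + ε² ∂_y²)(−Re √ε ∂_t + (∂_z² + ε ∂_x² + ε² ∂_y²)) w = 0 at every (x,y,z,t) ∈ ℝ⁴ if and only if 𝒜''''(z) − (ε k² + μ²) 𝒜''(z) + ε k² μ² 𝒜(z) = 0 for every z ∈ ℝ. -/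
noncomputable section

open Complex

/-- Partial derivative with respect to the first variable `x` (complex-valued). -/
def pdx (f : ℝ → ℝ → ℝ → ℝ → ℂ) : ℝ → ℝ → ℝ → ℝ → ℂ :=
  fun x y z t => deriv (fun x' => f x' y z t) x

/-- Partial derivative with respect to the second variable `y` (complex-valued). -/
def pdy (f : ℝ → ℝ → ℝ → ℝ → ℂ) : ℝ → ℝ → ℝ → ℝ → ℂ :=
  fun x y z t => deriv (fun y' => f x y' z t) y

/-- Partial derivative with respect to the third variable `z` (complex-valued). -/
def pdz (f : ℝ → ℝ → ℝ → ℝ → ℂ) : ℝ → ℝ → ℝ → ℝ → ℂ :=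
  fun x y z t => deriv (fun z' => f x y z' t) z

/-- Partial derivative with respect to the fourth variable `t` (complex-valued). -/
def pdt (f : ℝ → ℝ → ℝ → ℝ → ℂ) : ℝ → ℝ → ℝ → ℝ → ℂ :=
  fun x y z t => deriv (fun t' => f x y z t') t

/-- The operator `∂_z² + ε ∂_x² + ε² ∂_y²` (complex-valued). -/
def Lop (ε : ℝ) (f : ℝ → ℝ → ℝ → ℝ → ℂ) : ℝ → ℝ → ℝ → ℝ → ℂ :=
  fun x y z t =>
    pdz (pdz f) x y z t + (ε : ℂ) * pdx (pdx f) x y z t + (ε : ℂ) ^ 2 * pdy (pdy f) x y z t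

/-- The plane wave with vertical profile `B`. -/
def planeW (kx ky : ℝ) (ω : ℂ) (B : ℝ → ℂ) : ℝ → ℝ → ℝ → ℝ → ℂ :=
  fun x y z t =>
    B z * Complex.exp (Complex.I * ((kx : ℂ) * (x : ℂ) + (ky : ℂ) * (y : ℂ) - ω * (t : ℂ)))

theorem deriv_cexp_affine (b p q : ℂ) (x : ℝ) (g : ℝ → ℂ) (hg : ∀ s : ℝ, g s = p * (s : ℂ) + q) :
    deriv (fun s : ℝ => b * Complex.exp (g s)) x = p * b * Complex.exp (g x) := by
  have h0 : HasDerivAt (fun s : ℝ => (s : ℂ)) 1 x := Complex.ofRealCLM.hasDerivAt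
  have h1 : HasDerivAt g p x := by
    have h2 := (h0.const_mul p).add_const q
    rw [mul_one] at h2
    rw [funext hg]
    exact h2
  rw [(h1.cexp.const_mul b).deriv]
  ring

theorem pdz_planeW (kx ky : ℝ) (ω : ℂ) (B : ℝ → ℂ) :
    pdz (planeW kx ky ω B) = planeW kx ky ω (deriv B) := by
  funext x y z t
  simp only [pdz, planeW, deriv_mul_const_field]

theorem pdx_planeW (kx ky : ℝ) (ω : ℂ) (B : ℝ → ℂ) :
    pdx (planeW kx ky ω B) = planeW kx ky ω (fun z => Complex.I * kx * B z) := by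
  funext x y z t
  exact deriv_cexp_affine (B z) (Complex.I * kx) (Complex.I * (ky * y - ω * t)) x _
    (fun s => by ring)

theorem pdy_planeW (kx ky : ℝ) (ω : ℂ) (B : ℝ → ℂ) :
    pdy (planeW kx ky ω B) = planeW kx ky ω (fun z => Complex.I * ky * B z) := by
  funext x y z t
  exact deriv_cexp_affine (B z) (Complex.I * ky) (Complex.I * (kx * x - ω * t)) y _
    (fun s => by ring)

theorem pdt_planeW (kx ky : ℝ) (ω : ℂ) (B : ℝ → ℂ) :
    pdt (planeW kx ky ω B) = planeW kx ky ω (fun z => -Complex.I * ω * B z) := by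
  funext x y z t
  exact deriv_cexp_affine (B z) (-Complex.I * ω) (Complex.I * (kx * x + ky * y)) t _
    (fun s => by ring)

theorem Lop_planeW (ε kx ky : ℝ) (ω : ℂ) (B : ℝ → ℂ) :
    Lop ε (planeW kx ky ω B) = planeW kx ky ω
      (fun z => deriv (deriv B) z - (↑(ε * (kx ^ 2 + ε * ky ^ 2)) : ℂ) * B z) := by
  funext x y z t
  simp only [Lop, pdz_planeW, pdx_planeW, pdy_planeW]
  simp only [planeW]
  push_cast
  linear_combination (B z * Complex.exp (Complex.I * ((kx : ℂ) * (x : ℂ) + (ky : ℂ) * (y : ℂ)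
    - ω * (t : ℂ)))) * (ε * kx ^ 2 + ε ^ 2 * ky ^ 2) * Complex.I_sq

theorem plane_wave_ansatz_reduces_to_ODE
    (ε Re kx ky : ℝ) (hε : 0 < ε) (hRe : 0 < Re) (hkx : 0 ≤ kx) (hky : 0 ≤ ky)
    (ω : ℂ)
    (ksq : ℝ) (hksq : ksq = kx ^ 2 + ε * ky ^ 2)
    (musq : ℂ) (hmusq : musq = (↑(ε * ksq) : ℂ) - Complex.I * ω * ↑(Re * Real.sqrt ε))
    (A : ℝ → ℂ) (hA : ContDiff ℝ 4 A)
    (w : ℝ → ℝ → ℝ → ℝ → ℂ)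
    (hw : w = fun (x y z t : ℝ) =>
      A z * Complex.exp (Complex.I * ((kx : ℂ) * (x : ℂ) + (ky : ℂ) * (y : ℂ) - ω * (t : ℂ)))) :
    (∀ x y z t : ℝ,
      Lop ε (fun x' y' z' t' =>
        -(↑(Re * Real.sqrt ε) : ℂ) * pdt w x' y' z' t' + Lop ε w x' y' z' t') x y z t = 0)
    ↔
    (∀ z : ℝ,
      iteratedDeriv 4 A z - ((↑(ε * ksq) : ℂ) + musq) * iteratedDeriv 2 A z
        + (↑(ε * ksq) : ℂ) * musq * A z = 0) := by
  subst hksq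
  have hw' : w = planeW kx ky ω A := hw
  have hin : (fun x' y' z' t' =>
        -(↑(Re * Real.sqrt ε) : ℂ) * pdt w x' y' z' t' + Lop ε w x' y' z' t')
      = planeW kx ky ω (fun z => deriv (deriv A) z - musq * A z) := by
    funext x y z t
    rw [hw', pdt_planeW, Lop_planeW, hmusq]
    simp only [planeW]
    ring
  have hA3 : ContDiff ℝ 3 (deriv A) :=
    ((contDiff_succ_iff_deriv (n := 3)).1 (by exact_mod_cast hA)).2.2
  have hA2 : ContDiff ℝ 2 (deriv (deriv A)) :=
    ((contDiff_succ_iff_deriv (n := 2)).1 (by exact_mod_cast hA3)).2.2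
  have hA1 : ContDiff ℝ 1 (deriv (deriv (deriv A))) :=
    ((contDiff_succ_iff_deriv (n := 1)).1 (by exact_mod_cast hA2)).2.2
  have d0 : Differentiable ℝ A := hA.differentiable (by norm_num)
  have d1 : Differentiable ℝ (deriv A) := hA3.differentiable (by norm_num)
  have d2 : Differentiable ℝ (deriv (deriv A)) := hA2.differentiable (by norm_num)
  have d3 : Differentiable ℝ (deriv (deriv (deriv A))) := hA1.differentiable (by norm_num)
  have e1 : deriv (fun z => deriv (deriv A) z - musq * A z)
      = fun z => deriv (deriv (deriv A)) z - musq * deriv A z := by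
    funext z
    exact ((d2 z).hasDerivAt.sub ((d0 z).hasDerivAt.const_mul musq)).deriv
  have e2 : deriv (fun z => deriv (deriv (deriv A)) z - musq * deriv A z)
      = fun z => deriv (deriv (deriv (deriv A))) z - musq * deriv (deriv A) z := by
    funext z
    exact ((d3 z).hasDerivAt.sub ((d1 z).hasDerivAt.const_mul musq)).deriv
  have i2 : iteratedDeriv 2 A = deriv (deriv A) := by
    simp only [iteratedDeriv_succ, iteratedDeriv_zero]
  have i4 : iteratedDeriv 4 A = deriv (deriv (deriv (deriv A))) := by
    simp only [iteratedDeriv_succ, iteratedDeriv_zero]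
  rw [hin, Lop_planeW, e1, e2, i2, i4]
  simp only [planeW]
  constructor
  · intro h z
    have h1 := (mul_eq_zero.1 (h 0 0 z 0)).resolve_right (Complex.exp_ne_zero _)
    linear_combination h1
  · intro h x y z t
    refine mul_eq_zero_of_left ?_ _
    linear_combination h z
end
end

section
/- Let ε > 0, Re > 0, Bo > 0 and k > 0 be real, ω ∈ ℂ, and let μ ∈ ℂ satisfy μ² = ε k² − i ω Re √ε. Let k_x, k_y ≥ 0 with k² = k_x² + ε k_y². For constants C₁, C₂, C₃, C₄ ∈ ℂ, set 𝒜(z) := C₁ cosh(√ε k (z−1)) + C₂ sinh(√ε k (z−1)) + C₃ cosh(μ (z−1)) + C₄ sinh(μ (z−1)) and w(x,y,z,t) := 𝒜(z) exp(i(k_x x + k_y y − ω t)). Then w satisfies the four linearized boundary conditions w_z = 0 and w = 0 at z = 0, w_zz − ε w_xx − ε² w_yy = 0 at z = 1, and w_xx + ε w_yy − w_ztt + (3√ε/Re)(w_xxzt + ε w_yyzt) + (1/(Re √ε)) w_zzzt = (1/Bo)(∂_x² + ε ∂_y²)² w at z = 1, if and only if the vector (C₁, C₂, C₃, C₄) lies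 in the kernel of the 4×4 complex matrix M with rows: (√ε k sinh(√ε k), −√ε k cosh(√ε k), μ sinh μ, −μ cosh μ); (cosh(√ε k), −sinh(√ε k), cosh μ, −sinh μ); (2 k² ε, 0, μ² + ε k², 0); (−k² − k⁴/Bo, √ε ω² k + 2 i ε ω k³/Re, −k² − k⁴/Bo, 2 μ √ε i ω k²/Re). -/
noncomputable section

open Complex

/-- The operator `∂_x² + ε ∂_y²` (complex-valued). -/
def Pop (ε : ℝ) (f : ℝ → ℝ → ℝ → ℝ → ℂ) : ℝ → ℝ → ℝ → ℝ → ℂ :=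
  fun x y z t => pdx (pdx f) x y z t + (ε : ℂ) * pdy (pdy f) x y z t

/-- The normal mode with constants `a b c d`. -/
def GG (s m p q o : ℂ) (a b c d : ℂ) : ℝ → ℝ → ℝ → ℝ → ℂ := fun x y z t =>
  (a * Complex.cosh (s * ((z : ℂ) - 1)) + b * Complex.sinh (s * ((z : ℂ) - 1))
    + c * Complex.cosh (m * ((z : ℂ) - 1)) + d * Complex.sinh (m * ((z : ℂ) - 1)))
  * Complex.exp (Complex.I * (p * (x : ℂ) + q * (y : ℂ) - o * (t : ℂ)))

lemma hasDerivAt_expLin (u v : ℂ) (x : ℝ) :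
    HasDerivAt (fun x : ℝ => Complex.exp (u * (x : ℂ) + v)) (u * Complex.exp (u * (x : ℂ) + v)) x := by
  have h : HasDerivAt (fun x : ℂ => Complex.exp (u * x + v)) (Complex.exp (u * (x : ℂ) + v) * (u * 1))
      (x : ℂ) := (((hasDerivAt_id (x : ℂ)).const_mul u).add_const v).cexp
  have := h.comp_ofReal
  convert this using 1
  ring

lemma deriv_const_expLin (K u v : ℂ) (x : ℝ) (f : ℝ → ℂ)
    (hf : ∀ x, f x = K * Complex.exp (u * (x : ℂ) + v)) : deriv f x = u * f x := by
  have : f = fun x : ℝ => K * Complex.exp (u * (x : ℂ) + v) := funext hf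
  rw [this, ((hasDerivAt_expLin u v x).const_mul K).deriv]
  ring

lemma pdx_GG (s m p q o a b c d : ℂ) : pdx (GG s m p q o a b c d) =
    GG s m p q o (Complex.I * p * a) (Complex.I * p * b) (Complex.I * p * c) (Complex.I * p * d) := by
  funext x y z t
  unfold pdx
  rw [deriv_const_expLin _ (Complex.I * p) (Complex.I * (q * y - o * t)) x _
    (fun x => by
      unfold GG
      rw [show Complex.I * (p * (x : ℂ) + q * (y : ℂ) - o * (t : ℂ))
        = Complex.I * p * (x : ℂ) + Complex.I * (q * y - o * t) by ring])]
  unfold GG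
  ring

lemma pdy_GG (s m p q o a b c d : ℂ) : pdy (GG s m p q o a b c d) =
    GG s m p q o (Complex.I * q * a) (Complex.I * q * b) (Complex.I * q * c) (Complex.I * q * d) := by
  funext x y z t
  unfold pdy
  rw [deriv_const_expLin _ (Complex.I * q) (Complex.I * (p * x - o * t)) y _
    (fun y => by
      unfold GG
      rw [show Complex.I * (p * (x : ℂ) + q * (y : ℂ) - o * (t : ℂ))
        = Complex.I * q * (y : ℂ) + Complex.I * (p * x - o * t) by ring])]
  unfold GG
  ring

lemma pdt_GG (s m p q o a b c d : ℂ) : pdt (GG s m p q o a b c d) =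
    GG s m p q o (-Complex.I * o * a) (-Complex.I * o * b) (-Complex.I * o * c)
      (-Complex.I * o * d) := by
  funext x y z t
  unfold pdt
  rw [deriv_const_expLin _ (-Complex.I * o) (Complex.I * (p * x + q * y)) t _
    (fun t => by
      unfold GG
      rw [show Complex.I * (p * (x : ℂ) + q * (y : ℂ) - o * (t : ℂ))
        = -Complex.I * o * (t : ℂ) + Complex.I * (p * x + q * y) by ring])]
  unfold GG
  ring

lemma pdz_GG (s m p q o a b c d : ℂ) : pdz (GG s m p q o a b c d) =
    GG s m p q o (s * b) (s * a) (m * d) (m * c) := by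
  funext x y z t
  unfold pdz
  have l : ∀ s : ℂ, HasDerivAt (fun z : ℂ => s * (z - 1)) (s * 1) (z : ℂ) := fun s =>
    ((hasDerivAt_id (z : ℂ)).sub_const 1).const_mul s
  have h := (((((l s).ccosh.const_mul a).add ((l s).csinh.const_mul b)).add
    ((l m).ccosh.const_mul c)).add ((l m).csinh.const_mul d)).mul_const
    (Complex.exp (Complex.I * (p * (x : ℂ) + q * (y : ℂ) - o * (t : ℂ))))
  have h2 := h.comp_ofReal.deriv
  refine Eq.trans h2 ?_
  unfold GG
  ring

lemma Pop_GG (ε : ℝ) (s m p q o a b c d : ℂ) : Pop ε (GG s m p q o a b c d) =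
    GG s m p q o (-(p ^ 2 + ε * q ^ 2) * a) (-(p ^ 2 + ε * q ^ 2) * b)
      (-(p ^ 2 + ε * q ^ 2) * c) (-(p ^ 2 + ε * q ^ 2) * d) := by
  funext x y z t
  unfold Pop
  rw [pdx_GG, pdx_GG, pdy_GG, pdy_GG]
  unfold GG
  linear_combination (p ^ 2 + ε * q ^ 2) * (a * Complex.cosh (s * ((z : ℂ) - 1)) + b * Complex.sinh (s * ((z : ℂ) - 1))
    + c * Complex.cosh (m * ((z : ℂ) - 1)) + d * Complex.sinh (m * ((z : ℂ) - 1)))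
    * Complex.exp (Complex.I * (p * (x : ℂ) + q * (y : ℂ) - o * (t : ℂ))) * Complex.I_sq

theorem boundary_conditions_iff_kernel
    (ε Re Bo k kx ky : ℝ) (hε : 0 < ε) (hRe : 0 < Re) (hBo : 0 < Bo) (hk : 0 < k)
    (hkx : 0 ≤ kx) (hky : 0 ≤ ky) (hk2 : k ^ 2 = kx ^ 2 + ε * ky ^ 2)
    (ω μ : ℂ)
    (hμ : μ ^ 2 = ((ε * k ^ 2 : ℝ) : ℂ) - Complex.I * ω * ((Re * Real.sqrt ε : ℝ) : ℂ))
    (C₁ C₂ C₃ C₄ : ℂ)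
    (A : ℝ → ℂ)
    (hA : A = fun z : ℝ =>
      C₁ * Complex.cosh (((Real.sqrt ε * k * (z - 1) : ℝ) : ℂ))
        + C₂ * Complex.sinh (((Real.sqrt ε * k * (z - 1) : ℝ) : ℂ))
        + C₃ * Complex.cosh (μ * ((z : ℂ) - 1))
        + C₄ * Complex.sinh (μ * ((z : ℂ) - 1)))
    (w : ℝ → ℝ → ℝ → ℝ → ℂ)
    (hw : w = fun (x y z t : ℝ) =>
      A z * Complex.exp (Complex.I * ((kx : ℂ) * (x : ℂ) + (ky : ℂ) * (y : ℂ) - ω * (t : ℂ))))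
    (M : Matrix (Fin 4) (Fin 4) ℂ)
    (hM : M = !![
      ((Real.sqrt ε * k : ℝ) : ℂ) * Complex.sinh (((Real.sqrt ε * k : ℝ) : ℂ)),
        -((Real.sqrt ε * k : ℝ) : ℂ) * Complex.cosh (((Real.sqrt ε * k : ℝ) : ℂ)),
        μ * Complex.sinh μ, -μ * Complex.cosh μ;
      Complex.cosh (((Real.sqrt ε * k : ℝ) : ℂ)), -Complex.sinh (((Real.sqrt ε * k : ℝ) : ℂ)),
        Complex.cosh μ, -Complex.sinh μ;
      ((2 * k ^ 2 * ε : ℝ) : ℂ), 0, μ ^ 2 + ((ε * k ^ 2 : ℝ) : ℂ), 0;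
      ((-(k ^ 2) - k ^ 4 / Bo : ℝ) : ℂ),
        (↑(Real.sqrt ε) : ℂ) * ω ^ 2 * (k : ℂ)
          + 2 * Complex.I * (ε : ℂ) * ω * (k : ℂ) ^ 3 / (Re : ℂ),
        ((-(k ^ 2) - k ^ 4 / Bo : ℝ) : ℂ),
        2 * μ * (↑(Real.sqrt ε) : ℂ) * Complex.I * ω * (k : ℂ) ^ 2 / (Re : ℂ)]) :
    (∀ x y t : ℝ,
      pdz w x y 0 t = 0 ∧
      w x y 0 t = 0 ∧
      pdz (pdz w) x y 1 t - (ε : ℂ) * pdx (pdx w) x y 1 t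
        - ((ε : ℂ)) ^ 2 * pdy (pdy w) x y 1 t = 0 ∧
      pdx (pdx w) x y 1 t + (ε : ℂ) * pdy (pdy w) x y 1 t - pdt (pdt (pdz w)) x y 1 t
        + ((3 * Real.sqrt ε / Re : ℝ) : ℂ) *
          (pdt (pdz (pdx (pdx w))) x y 1 t + (ε : ℂ) * pdt (pdz (pdy (pdy w))) x y 1 t)
        + ((1 / (Re * Real.sqrt ε) : ℝ) : ℂ) * pdt (pdz (pdz (pdz w))) x y 1 t
        = ((1 / Bo : ℝ) : ℂ) * Pop ε (Pop ε w) x y 1 t)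
    ↔ M.mulVec ![C₁, C₂, C₃, C₄] = 0 := by
  obtain ⟨r, hr⟩ : ∃ r : ℂ, r = ((Real.sqrt ε : ℝ) : ℂ) := ⟨_, rfl⟩
  have hr2 : r ^ 2 = (ε : ℂ) := by
    rw [hr, ← Complex.ofReal_pow, Real.sq_sqrt hε.le]
  have hr0 : r ≠ 0 := by
    rw [hr]; exact_mod_cast (Real.sqrt_pos.2 hε).ne'
  have hRe0 : (Re : ℂ) ≠ 0 := by exact_mod_cast hRe.ne'
  have hBo0 : (Bo : ℂ) ≠ 0 := by exact_mod_cast hBo.ne'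
  have hk2' : (k : ℂ) ^ 2 = (kx : ℂ) ^ 2 + ε * (ky : ℂ) ^ 2 := by exact_mod_cast hk2
  have hμ' : μ ^ 2 = ε * (k : ℂ) ^ 2 - Complex.I * ω * (Re * r) := by
    rw [hμ, hr]; push_cast; ring
  have hwG : w = GG (r * k) μ kx ky ω C₁ C₂ C₃ C₄ := by
    rw [hw, hA, hr]
    funext x y z t
    unfold GG
    push_cast
    rfl
  have hker : M.mulVec ![C₁, C₂, C₃, C₄] = 0 ↔
      (r * k * Complex.sinh (r * k) * C₁ - r * k * Complex.cosh (r * k) * C₂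
        + μ * Complex.sinh μ * C₃ - μ * Complex.cosh μ * C₄ = 0 ∧
      Complex.cosh (r * k) * C₁ - Complex.sinh (r * k) * C₂
        + Complex.cosh μ * C₃ - Complex.sinh μ * C₄ = 0 ∧
      2 * k ^ 2 * ε * C₁ + (μ ^ 2 + ε * k ^ 2) * C₃ = 0 ∧
      (-k ^ 2 - k ^ 4 / Bo) * C₁ + (r * ω ^ 2 * k + 2 * Complex.I * ε * ω * k ^ 3 / Re) * C₂
        + (-k ^ 2 - k ^ 4 / Bo) * C₃ + 2 * μ * r * Complex.I * ω * k ^ 2 / Re * C₄ = 0) := by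
    rw [hM, funext_iff, Fin.forall_fin_succ, Fin.forall_fin_succ, Fin.forall_fin_succ,
      Fin.forall_fin_one]
    simp [Matrix.mulVec, dotProduct, Fin.sum_univ_four, ← hr, sub_eq_add_neg, add_assoc]
  rw [hker]
  have key : ∀ x y t : ℝ, ∃ E : ℂ, E ≠ 0 ∧
      pdz w x y 0 t = -E * (r * k * Complex.sinh (r * k) * C₁ - r * k * Complex.cosh (r * k) * C₂
        + μ * Complex.sinh μ * C₃ - μ * Complex.cosh μ * C₄) ∧
      w x y 0 t = E * (Complex.cosh (r * k) * C₁ - Complex.sinh (r * k) * C₂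
        + Complex.cosh μ * C₃ - Complex.sinh μ * C₄) ∧
      pdz (pdz w) x y 1 t - (ε : ℂ) * pdx (pdx w) x y 1 t
        - ((ε : ℂ)) ^ 2 * pdy (pdy w) x y 1 t
        = E * (2 * k ^ 2 * ε * C₁ + (μ ^ 2 + ε * k ^ 2) * C₃) ∧
      pdx (pdx w) x y 1 t + (ε : ℂ) * pdy (pdy w) x y 1 t - pdt (pdt (pdz w)) x y 1 t
        + ((3 * Real.sqrt ε / Re : ℝ) : ℂ) *
          (pdt (pdz (pdx (pdx w))) x y 1 t + (ε : ℂ) * pdt (pdz (pdy (pdy w))) x y 1 t)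
        + ((1 / (Re * Real.sqrt ε) : ℝ) : ℂ) * pdt (pdz (pdz (pdz w))) x y 1 t
        - ((1 / Bo : ℝ) : ℂ) * Pop ε (Pop ε w) x y 1 t
        = E * ((-k ^ 2 - k ^ 4 / Bo) * C₁
          + (r * ω ^ 2 * k + 2 * Complex.I * ε * ω * k ^ 3 / Re) * C₂
          + (-k ^ 2 - k ^ 4 / Bo) * C₃ + 2 * μ * r * Complex.I * ω * k ^ 2 / Re * C₄) := by
    intro x y t
    refine ⟨Complex.exp (Complex.I * (kx * (x : ℂ) + ky * (y : ℂ) - ω * (t : ℂ))),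
      Complex.exp_ne_zero _, ?_, ?_, ?_, ?_⟩
    · rw [hwG, pdz_GG]
      simp only [GG, Complex.ofReal_zero, zero_sub, mul_neg, mul_one, Complex.cosh_neg,
        Complex.sinh_neg]
      ring
    · rw [hwG]
      simp only [GG, Complex.ofReal_zero, zero_sub, mul_neg, mul_one, Complex.cosh_neg,
        Complex.sinh_neg]
      ring
    · rw [hwG]
      simp only [pdz_GG, pdx_GG, pdy_GG]
      simp only [GG, Complex.ofReal_one, sub_self, mul_zero, Complex.cosh_zero, Complex.sinh_zero]
      generalize Complex.exp _ = E
      have hI := Complex.I_sq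
      linear_combination (E * k ^ 2 * C₁) * hr2 - (ε * E * (C₁ + C₃)) * hk2'
        - (ε * E * (C₁ + C₃) * (kx ^ 2 + ε * ky ^ 2)) * hI
    · rw [hwG]
      simp only [Pop_GG, pdz_GG, pdx_GG, pdy_GG, pdt_GG]
      simp only [GG, Complex.ofReal_one, sub_self, mul_zero, Complex.cosh_zero, Complex.sinh_zero]
      generalize Complex.exp _ = E
      push_cast
      rw [← hr, ← hk2']
      have hI := Complex.I_sq
      have hω : Complex.I * ω = (r ^ 2 * k ^ 2 - μ ^ 2) / (Re * r) := by
        rw [eq_div_iff (by positivity), hr2, hμ']; ring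
      have e1 : ∀ X : ℂ, Complex.I * kx * (Complex.I * kx * X)
          + ε * (Complex.I * ky * (Complex.I * ky * X)) = - k ^ 2 * X := by
        intro X
        linear_combination (kx ^ 2 + ε * ky ^ 2) * X * hI + X * hk2'
      have e2 : ∀ X : ℂ, -Complex.I * ω * (-Complex.I * ω * X) = - ω ^ 2 * X := by
        intro X
        linear_combination ω ^ 2 * X * hI
      have e3 : 1 / (Re * r) * (Complex.I * ω) * μ ^ 2
          = Complex.I * ω * r * k ^ 2 / Re + ω ^ 2 := by
        rw [hμ', ← hr2]
        field_simp
        linear_combination (-ω ^ 2 * Re) * hI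
      have e4 : 1 / (Re * r) * r ^ 2 = r / Re := by
        field_simp
      rw [e2, e2]
      linear_combination (E * (C₁ + C₃)) * e1 1
        + (3 * r / Re * (-Complex.I * ω) * (r * k * C₂ + μ * C₄) * E) * e1 1
        - (μ * C₄ * E) * e3
        - (Complex.I * ω * r * k ^ 3 * C₂ * E) * e4
        + (2 * Complex.I * ω * k ^ 3 / Re * C₂ * E) * hr2
  constructor
  · intro h
    obtain ⟨E, hE, h1, h2, h3, h4⟩ := key 0 0 0
    obtain ⟨g1, g2, g3, g4⟩ := h 0 0 0
    rw [g1] at h1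
    rw [g2] at h2
    rw [g3] at h3
    rw [sub_eq_zero.2 g4] at h4
    exact ⟨(mul_eq_zero.1 h1.symm).resolve_left (neg_ne_zero.2 hE),
      (mul_eq_zero.1 h2.symm).resolve_left hE,
      (mul_eq_zero.1 h3.symm).resolve_left hE, (mul_eq_zero.1 h4.symm).resolve_left hE⟩
  · rintro ⟨g1, g2, g3, g4⟩ x y t
    obtain ⟨E, hE, h1, h2, h3, h4⟩ := key x y t
    rw [g1, mul_zero] at h1
    rw [g2, mul_zero] at h2
    rw [g3, mul_zero] at h3
    rw [g4, mul_zero] at h4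
    exact ⟨h1, h2, h3, sub_eq_zero.1 h4⟩
end
end
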